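/- The quadratic B-spline β² and the cubic B-spline β³ both lie in the shift-invariant space generated by the cubic Hermite splines: there exist finitely supported real sequences (a_k), (b_k), (c_k), (d_k) such that β²(t) = Σ_{k∈ℤ} a_k φ₁(t−k) + b_k φ₂(t−k) and β³(t) = Σ_{k∈ℤ} c_k φ₁(t−k) + d_k φ₂(t−k) for all t ∈ ℝ, where φ₁(t) = (2|t|+1)(|t|−1)²·𝟙_{|t|≤1} and φ₂(t) = t(|t|−1)²·𝟙_{|t|≤1}. In particular, every polynomial of degree at most 3 can be written as Σ_{k∈ℤ} c[k]φ₁(t−k) + d[k]φ₂(t−k) for suitable sequences c, d. -/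

import Mathlib

/-!
On each interval `[m, m+1]` with `m` an integer only the Hermite splines centred at `m` and `m+1`
are nonzero, and the sum `∑ₖ c k φ₁(t-k) + d k φ₂(t-k)` is there the cubic polynomial with values
`c m, c (m+1)` and slopes `d m, d (m+1)` at the endpoints (`tsum_hermite`). Since a cubic
polynomial is determined by these four data, any `C¹` piecewise cubic `f` with integer knots is
reproduced by `c k = f k`, `d k = f' k`. This applies to polynomials of degree at most `3`, and to
`β²`, `β³` once these are known explicitly: convolving with `β⁰` is integrating over `[x-1, x]`
(`bspline_succ`), which gives the truncated-power formulas `bspline_two` and `bspline_three`.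
-/

open MeasureTheory Topology

/-- The causal B-spline `β⁰`: the indicator function of `[0,1]`. -/
noncomputable def bspline0 : ℝ → ℝ := Set.indicator (Set.Icc 0 1) (fun _ => 1)

/-- The causal B-spline of order `n+1`, the `(n+1)`-fold convolution of the indicator
function of `[0,1]`. -/
noncomputable def bspline : ℕ → ℝ → ℝ
  | 0 => bspline0
  | n + 1 => convolution (bspline n) bspline0 (ContinuousLinearMap.mul ℝ ℝ) volume

/-- The first cubic Hermite spline `φ₁(t) = (2|t|+1)(|t|-1)²` for `|t| ≤ 1`, `0` otherwise. -/
noncomputable def hermite1 (t : ℝ) : ℝ :=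
  if |t| ≤ 1 then (2 * |t| + 1) * (|t| - 1) ^ 2 else 0

/-- The second cubic Hermite spline `φ₂(t) = t(|t|-1)²` for `|t| ≤ 1`, `0` otherwise. -/
noncomputable def hermite2 (t : ℝ) : ℝ :=
  if |t| ≤ 1 then t * (|t| - 1) ^ 2 else 0

lemma bspline_succ (n : ℕ) (x : ℝ) :
    bspline (n + 1) x = ∫ t in (x - 1)..x, bspline n t := by
  rw [intervalIntegral.integral_of_le (by linarith), ← integral_Icc_eq_integral_Ioc,
    ← integral_indicator measurableSet_Icc]
  simp only [bspline, convolution, ContinuousLinearMap.mul_apply']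
  congr 1
  ext t
  by_cases h : t ∈ Set.Icc (x - 1) x
  · have h' : x - t ∈ Set.Icc (0 : ℝ) 1 := ⟨by linarith [h.2], by linarith [h.1]⟩
    simp [bspline0, Set.indicator_of_mem h, Set.indicator_of_mem h']
  · have h' : x - t ∉ Set.Icc (0 : ℝ) 1 := fun h' => h ⟨by linarith [h'.2], by linarith [h'.1]⟩
    simp [bspline0, Set.indicator_of_notMem h, Set.indicator_of_notMem h']

/-- The antiderivative of a truncated power `t₊ⁿ`, `n ≥ 1`, is again a truncated power. -/
lemma integral_truncPow (n : ℕ) (hn : n ≠ 0) (k x : ℝ) :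
    ∫ t in (x - 1)..x, (max (t - k) 0) ^ n =
      ((max (x - k) 0) ^ (n + 1) - (max (x - 1 - k) 0) ^ (n + 1)) / (n + 1) := by
  have hn' : (n + 1 : ℝ) ≠ 0 := by positivity
  have key := intervalIntegral.integral_eq_sub_of_hasDeriv_right (a := x - 1) (b := x)
    (f := fun t : ℝ => (max (t - k) 0) ^ (n + 1) / (n + 1)) (f' := fun t => (max (t - k) 0) ^ n)
    (by fun_prop) ?_ (Continuous.intervalIntegrable (by fun_prop) _ _)
  · rw [key]; ring
  intro t _
  -- Only the right derivative is needed, so the knot `t = k` belongs to the polynomial branch.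
  rcases lt_or_ge t k with h | h
  · have h1 : HasDerivAt (fun _ : ℝ => (0 : ℝ)) 0 t := hasDerivAt_const _ _
    have h2 : (fun t : ℝ => (max (t - k) 0) ^ (n + 1) / (n + 1)) =ᶠ[𝓝 t] fun _ => (0 : ℝ) := by
      filter_upwards [Iio_mem_nhds h] with y hy
      have : y < k := hy
      rw [max_eq_right (by linarith)]; simp
    have h3 := (h1.congr_of_eventuallyEq h2).hasDerivWithinAt (s := Set.Ioi t)
    rwa [max_eq_right (by linarith), zero_pow hn]
  · have h1 : HasDerivAt (fun t : ℝ => (t - k) ^ (n + 1) / (n + 1)) ((t - k) ^ n) t := by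
      refine ((((hasDerivAt_id' t).sub_const k).fun_pow (n + 1)).div_const
        (n + 1 : ℝ)).congr_deriv ?_
      push_cast
      field_simp
    rw [max_eq_left (by linarith)]
    refine h1.hasDerivWithinAt.congr (fun y hy => ?_) ?_
    · have : t < y := hy
      rw [max_eq_left (by linarith)]
    · rw [max_eq_left (by linarith)]

lemma bspline_one (x : ℝ) :
    bspline 1 x = max x 0 - 2 * max (x - 1) 0 + max (x - 2) 0 := by
  rw [bspline_succ, intervalIntegral.integral_of_le (by linarith), ← integral_Icc_eq_integral_Ioc]
  simp only [bspline, bspline0]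
  rw [setIntegral_indicator measurableSet_Icc, Set.Icc_inter_Icc]
  rw [setIntegral_const, Measure.real, Real.volume_Icc, ENNReal.toReal_ofReal', smul_eq_mul,
    mul_one]
  grind

lemma bspline_two (x : ℝ) :
    bspline 2 x = ((max x 0) ^ 2 - 3 * (max (x - 1) 0) ^ 2 + 3 * (max (x - 2) 0) ^ 2
      - (max (x - 3) 0) ^ 2) / 2 := by
  have e : ∀ t, bspline 1 t = (max (t - 0) 0) ^ 1 - 2 * (max (t - 1) 0) ^ 1
      + (max (t - 2) 0) ^ 1 := by
    intro t; rw [bspline_one]; simp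
  rw [bspline_succ]
  simp only [e]
  have I : ∀ k : ℝ, IntervalIntegrable (fun t : ℝ => (max (t - k) 0) ^ 1) volume (x - 1) x :=
    fun k => Continuous.intervalIntegrable (by fun_prop) _ _
  rw [intervalIntegral.integral_add ((I 0).sub ((I 1).const_mul 2)) (I 2),
    intervalIntegral.integral_sub (I 0) ((I 1).const_mul 2), intervalIntegral.integral_const_mul]
  simp only [integral_truncPow 1 one_ne_zero]
  rw [show x - 1 - 1 = x - 2 by ring, show x - 1 - 2 = x - 3 by ring]
  norm_num
  ring

lemma bspline_three (x : ℝ) :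
    bspline 3 x = ((max x 0) ^ 3 - 4 * (max (x - 1) 0) ^ 3 + 6 * (max (x - 2) 0) ^ 3
      - 4 * (max (x - 3) 0) ^ 3 + (max (x - 4) 0) ^ 3) / 6 := by
  have e : ∀ t, bspline 2 t = ((max (t - 0) 0) ^ 2 - 3 * (max (t - 1) 0) ^ 2
      + 3 * (max (t - 2) 0) ^ 2 - (max (t - 3) 0) ^ 2) / 2 := by
    intro t; rw [bspline_two]; simp
  rw [bspline_succ]
  simp only [e]
  have I : ∀ k : ℝ, IntervalIntegrable (fun t : ℝ => (max (t - k) 0) ^ 2) volume (x - 1) x :=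
    fun k => Continuous.intervalIntegrable (by fun_prop) _ _
  rw [intervalIntegral.integral_div,
    intervalIntegral.integral_sub
      (((I 0).sub ((I 1).const_mul 3)).add ((I 2).const_mul 3)) (I 3),
    intervalIntegral.integral_add ((I 0).sub ((I 1).const_mul 3)) ((I 2).const_mul 3),
    intervalIntegral.integral_sub (I 0) ((I 1).const_mul 3),
    intervalIntegral.integral_const_mul, intervalIntegral.integral_const_mul]
  simp only [integral_truncPow 2 two_ne_zero]
  rw [show x - 1 - 1 = x - 2 by ring, show x - 1 - 2 = x - 3 by ring,
    show x - 1 - 3 = x - 4 by ring]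
  norm_num
  ring

/-- On `[m, m+1)` the Hermite series is the cubic Hermite interpolant of its coefficients. -/
lemma tsum_hermite (c d : ℤ → ℝ) (t : ℝ) (m : ℤ) (h0 : (m : ℝ) ≤ t) (h1 : t < m + 1) :
    ∑' k : ℤ, (c k * hermite1 (t - k) + d k * hermite2 (t - k)) =
      c m * ((2 * (t - m) + 1) * (1 - (t - m)) ^ 2) + d m * ((t - m) * (1 - (t - m)) ^ 2)
      + c (m + 1) * ((3 - 2 * (t - m)) * (t - m) ^ 2)
      + d (m + 1) * ((t - m - 1) * (t - m) ^ 2) := by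
  rw [tsum_eq_sum (s := {m, m + 1})]
  · rw [Finset.sum_pair (by simp)]
    have e1 : |t - (m : ℝ)| = t - m := abs_of_nonneg (by linarith)
    have e2 : |t - ((m + 1 : ℤ) : ℝ)| = 1 - (t - m) := by
      push_cast; rw [abs_of_nonpos (by linarith)]; ring
    simp only [hermite1, hermite2, e1, e2]
    rw [if_pos (by linarith), if_pos (by linarith), if_pos (by linarith), if_pos (by linarith)]
    push_cast
    ring
  · intro k hk
    simp only [Finset.mem_insert, Finset.mem_singleton, not_or] at hk
    have hlt : 1 ≤ |t - (k : ℝ)| := by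
      rcases (by omega : k ≤ m - 1 ∨ m + 2 ≤ k) with h | h
      · have : (k : ℝ) ≤ m - 1 := by exact_mod_cast h
        exact le_abs.2 (Or.inl (by linarith))
      · have : (m : ℝ) + 2 ≤ k := by exact_mod_cast h
        exact le_abs.2 (Or.inr (by linarith))
    -- Equality `|t - k| = 1` does occur, at `t = m`, `k = m - 1`; the splines vanish there too.
    rcases hlt.eq_or_lt with h | h
    · simp [hermite1, hermite2, ← h]
    · simp [hermite1, hermite2, not_le.2 h]

/-- The quadratic and cubic B-splines lie in the shift-invariant space
generated by the cubic Hermite splines, with finitely supported reproduction sequences;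
in particular every polynomial of degree at most `3` can be written as
`∑ₖ c[k] φ₁(t-k) + d[k] φ₂(t-k)`. -/
theorem hermite_reproduces_bsplines :
    (∃ a b c d : ℤ → ℝ,
      (Function.support a).Finite ∧ (Function.support b).Finite ∧
      (Function.support c).Finite ∧ (Function.support d).Finite ∧
      (∀ t : ℝ, bspline 2 t = ∑' k : ℤ, (a k * hermite1 (t - k) + b k * hermite2 (t - k))) ∧
      (∀ t : ℝ, bspline 3 t = ∑' k : ℤ, (c k * hermite1 (t - k) + d k * hermite2 (t - k)))) ∧
    (∀ P : Polynomial ℝ, P.degree ≤ 3 → ∃ c d : ℤ → ℝ,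
      ∀ t : ℝ, P.eval t = ∑' k : ℤ, (c k * hermite1 (t - k) + d k * hermite2 (t - k))) := by
  constructor
  · have fin : ∀ f : ℤ → ℝ, (∀ k, k < 0 ∨ 4 < k → f k = 0) → (Function.support f).Finite := by
      intro f hf
      refine (Set.finite_Icc (0 : ℤ) 4).subset fun k hk => ?_
      by_contra h
      refine hk (hf k ?_)
      simp only [Set.mem_Icc] at h
      omega
    -- The coefficients are the values and the derivatives of the B-splines at the integers.
    refine ⟨fun k => if k = 1 then 1 / 2 else if k = 2 then 1 / 2 else 0,
      fun k => if k = 1 then 1 else if k = 2 then -1 else 0,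
      fun k => if k = 1 then 1 / 6 else if k = 2 then 2 / 3 else if k = 3 then 1 / 6 else 0,
      fun k => if k = 1 then 1 / 2 else if k = 3 then -1 / 2 else 0,
      fin _ ?_, fin _ ?_, fin _ ?_, fin _ ?_, fun t => ?_, fun t => ?_⟩
    · intro k hk; grind
    · intro k hk; grind
    · intro k hk; grind
    · intro k hk; grind
    all_goals
      have h0 := Int.floor_le t
      have h1 := Int.lt_floor_add_one t
      generalize ⌊t⌋ = m at h0 h1
      rw [tsum_hermite _ _ t m h0 h1]
      first | rw [bspline_two] | rw [bspline_three]
      rcases (by omega : m < 0 ∨ m = 0 ∨ m = 1 ∨ m = 2 ∨ m = 3 ∨ 4 ≤ m) with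
        h | rfl | rfl | rfl | rfl | h
      · have : (m : ℝ) + 1 ≤ 0 := by exact_mod_cast h
        rw [max_eq_right (by linarith : t ≤ 0), max_eq_right (by linarith : t - 1 ≤ 0),
          max_eq_right (by linarith : t - 2 ≤ 0), max_eq_right (by linarith : t - 3 ≤ 0)]
        try rw [max_eq_right (by linarith : t - 4 ≤ 0)]
        simp [show m ≠ 1 by omega, show m ≠ 2 by omega, show m ≠ 3 by omega,
          show m ≠ 0 by omega, show m + 1 ≠ 2 by omega, show m + 1 ≠ 3 by omega]
      · norm_num at h0 h1
        rw [max_eq_left (by linarith : 0 ≤ t), max_eq_right (by linarith : t - 1 ≤ 0),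
          max_eq_right (by linarith : t - 2 ≤ 0), max_eq_right (by linarith : t - 3 ≤ 0)]
        try rw [max_eq_right (by linarith : t - 4 ≤ 0)]
        norm_num
        ring
      · norm_num at h0 h1
        rw [max_eq_left (by linarith : 0 ≤ t), max_eq_left (by linarith : 0 ≤ t - 1),
          max_eq_right (by linarith : t - 2 ≤ 0), max_eq_right (by linarith : t - 3 ≤ 0)]
        try rw [max_eq_right (by linarith : t - 4 ≤ 0)]
        norm_num
        ring
      · norm_num at h0 h1
        rw [max_eq_left (by linarith : 0 ≤ t), max_eq_left (by linarith : 0 ≤ t - 1),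
          max_eq_left (by linarith : 0 ≤ t - 2), max_eq_right (by linarith : t - 3 ≤ 0)]
        try rw [max_eq_right (by linarith : t - 4 ≤ 0)]
        norm_num
        ring
      · norm_num at h0 h1
        rw [max_eq_left (by linarith : 0 ≤ t), max_eq_left (by linarith : 0 ≤ t - 1),
          max_eq_left (by linarith : 0 ≤ t - 2), max_eq_left (by linarith : 0 ≤ t - 3)]
        try rw [max_eq_right (by linarith : t - 4 ≤ 0)]
        norm_num
        ring
      · have : (4 : ℝ) ≤ m := by exact_mod_cast h
        rw [max_eq_left (by linarith : 0 ≤ t), max_eq_left (by linarith : 0 ≤ t - 1),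
          max_eq_left (by linarith : 0 ≤ t - 2), max_eq_left (by linarith : 0 ≤ t - 3)]
        try rw [max_eq_left (by linarith : 0 ≤ t - 4)]
        simp [show m ≠ 1 by omega, show m ≠ 2 by omega, show m ≠ 3 by omega,
          show m ≠ 0 by omega, show m + 1 ≠ 2 by omega, show m + 1 ≠ 3 by omega]
        ring
  · intro P hP
    have hd : P.natDegree < 4 :=
      Nat.lt_succ_of_le (Polynomial.natDegree_le_of_degree_le hP)
    refine ⟨fun k => P.eval (k : ℝ),
      fun k => P.coeff 1 + 2 * P.coeff 2 * k + 3 * P.coeff 3 * k ^ 2, fun t => ?_⟩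
    rw [tsum_hermite _ _ t ⌊t⌋ (Int.floor_le t) (Int.lt_floor_add_one t)]
    simp only [Polynomial.eval_eq_sum_range' hd, Finset.sum_range_succ, Finset.sum_range_zero]
    push_cast
    ring
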